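/- (UID Chase Similarity Theorem) Let I₀ be an instance, Σ_UID a transitively closed set of UIDs, and n ∈ ℕ. Let a and b be elements introduced in the chase Chase(I₀, Σ_UID) at positions R^p and S^q respectively. If a and b are both n-essential and both UIDs R^p ⊆ S^q and S^q ⊆ R^p are in Σ_UID, then a ≃_n b in Chase(I₀, Σ_UID). -/

import Mathlib

namespace FQA

/-- A relational signature: a finite set of relation names, each with an arity `≥ 1`. -/
structure Sig where
  Rel : Type
  rel_fin : Finite Rel
  ar : Rel → ℕ
  ar_pos : ∀ R, 1 ≤ ar R

/-- The positions of a signature: pairs of a relation and an index into its arity. -/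
abbrev Sig.Pos (σ : Sig) : Type := Σ R : σ.Rel, Fin (σ.ar R)

/-- A fact `R(a₁, …, a_{ar R})` with elements from `α`. -/
abbrev Fact (σ : Sig) (α : Type) : Type := Σ R : σ.Rel, Fin (σ.ar R) → α

/-- An instance is a set of facts. -/
abbrev Inst (σ : Sig) (α : Type) : Type := Set (Fact σ α)

variable {σ : Sig} {α β : Type}

/-- Element `a` occurs at position `p` in some fact of the instance `I`. -/
def occursAt (I : Inst σ α) (p : σ.Pos) (a : α) : Prop :=
  ∃ t : Fin (σ.ar p.1) → α, (⟨p.1, t⟩ : Fact σ α) ∈ I ∧ t p.2 = a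

/-- The active domain of an instance: the elements occurring in some fact. -/
def activeDom (I : Inst σ α) : Set α :=
  {a | ∃ F : Fact σ α, F ∈ I ∧ ∃ i, F.2 i = a}

/-- A unary inclusion dependency `src ⊆ dst` (nontrivial: `src ≠ dst`). -/
structure UID (σ : Sig) where
  src : σ.Pos
  dst : σ.Pos
  ne : src ≠ dst

/-- The reverse of a UID. -/
def UID.rev (τ : UID σ) : UID σ := ⟨τ.dst, τ.src, τ.ne.symm⟩

/-- An instance satisfies a UID if every element occurring at `src` also occurs at `dst`. -/
def satUID (I : Inst σ α) (τ : UID σ) : Prop :=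
  ∀ a, occursAt I τ.src a → occursAt I τ.dst a

/-- A unary functional dependency `R^src → R^dst` (nontrivial: `src ≠ dst`). -/
structure UFD (σ : Sig) where
  rel : σ.Rel
  src : Fin (σ.ar rel)
  dst : Fin (σ.ar rel)
  ne : src ≠ dst

/-- The reverse of a UFD. -/
def UFD.rev (φ : UFD σ) : UFD σ := ⟨φ.rel, φ.dst, φ.src, φ.ne.symm⟩

/-- The source position of a UFD, as a position of the signature. -/
def UFD.posSrc (φ : UFD σ) : σ.Pos := ⟨φ.rel, φ.src⟩

/-- The target position of a UFD, as a position of the signature. -/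
def UFD.posDst (φ : UFD σ) : σ.Pos := ⟨φ.rel, φ.dst⟩

/-- An instance satisfies a UFD if any two facts of `rel` agreeing at `src` agree at `dst`. -/
def satUFD (I : Inst σ α) (φ : UFD σ) : Prop :=
  ∀ t u : Fin (σ.ar φ.rel) → α,
    (⟨φ.rel, t⟩ : Fact σ α) ∈ I → (⟨φ.rel, u⟩ : Fact σ α) ∈ I →
    t φ.src = u φ.src → t φ.dst = u φ.dst

/-- A set of UIDs is transitively closed. -/
def TransClosedUID (Su : Set (UID σ)) : Prop :=
  ∀ τ ∈ Su, ∀ τ' ∈ Su, τ.dst = τ'.src →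
    ∀ h : τ.src ≠ τ'.dst, (⟨τ.src, τ'.dst, h⟩ : UID σ) ∈ Su

/-- A set of UFDs is closed under UFD transitivity. -/
def TransClosedUFD (Sf : Set (UFD σ)) : Prop :=
  ∀ (R : σ.Rel) (i j k : Fin (σ.ar R)) (h1 : i ≠ j) (h2 : j ≠ k) (h3 : i ≠ k),
    (⟨R, i, j, h1⟩ : UFD σ) ∈ Sf → (⟨R, j, k, h2⟩ : UFD σ) ∈ Sf →
    (⟨R, i, k, h3⟩ : UFD σ) ∈ Sf

/-- Elements of the UID chase: base elements of the initial instance, and nulls.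
The null `CEl.null x p r` is the fresh element placed at position `r` of the fact
created to satisfy the requirement that `x` appear at position `p`. -/
inductive CEl (σ : Sig) : Type
  | base : ℕ → CEl σ
  | null : CEl σ → σ.Pos → σ.Pos → CEl σ

/-- `Created I₀ Su x p` holds when the UID chase of `I₀` by the (transitively closed)
UIDs `Su` creates a new fact whose exported element is `x`, placed at position `p`.
The first round is performed as a core-chase round: for each element of `I₀` and each
position where it wants to appear, a single new fact is created; afterwards, each
null introduced at a position `r` spawns one new fact for each UID of `Su` with
source `r`. -/
inductive Created (I₀ : Inst σ ℕ) (Su : Set (UID σ)) : CEl σ → σ.Pos → Prop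
  | root (a : ℕ) (p : σ.Pos) :
      (∃ τ ∈ Su, τ.dst = p ∧ occursAt I₀ τ.src a) →
      ¬ occursAt I₀ p a →
      Created I₀ Su (CEl.base a) p
  | step (x : CEl σ) (p r q : σ.Pos) :
      Created I₀ Su x p → r.1 = p.1 → r ≠ p →
      (∃ τ ∈ Su, τ.src = r ∧ τ.dst = q) →
      Created I₀ Su (CEl.null x p r) q

/-- The UID chase of `I₀` by `Su`: the facts of `I₀` (over base elements) together
with, for each requirement `(x, p)` that is created, the fact of relation `p.1` with
`x` at position `p` and fresh nulls at all other positions. -/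
def chaseInst (I₀ : Inst σ ℕ) (Su : Set (UID σ)) : Inst σ (CEl σ) :=
  {F | (∃ F₀ : Fact σ ℕ, F₀ ∈ I₀ ∧ F = ⟨F₀.1, fun i => CEl.base (F₀.2 i)⟩) ∨
       (∃ (x : CEl σ) (p : σ.Pos), Created I₀ Su x p ∧
          F = ⟨p.1, fun i => if i = p.2 then x else CEl.null x p ⟨p.1, i⟩⟩)}

/-- `a` is introduced at position `r` in the chase: `a` is a null placed at a
non-exported position `r` of the fact created for some requirement `(x, p)`. -/
def IntroducedAt (I₀ : Inst σ ℕ) (Su : Set (UID σ)) (a : CEl σ) (r : σ.Pos) : Prop :=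
  ∃ (x : CEl σ) (p : σ.Pos), Created I₀ Su x p ∧ r.1 = p.1 ∧ r ≠ p ∧ a = CEl.null x p r

/-- Some UID of `Su` that was applied to create the fact for requirement `(x, p)`
has its reverse in `Su`. -/
def usedUIDRev (I₀ : Inst σ ℕ) (Su : Set (UID σ)) : CEl σ → σ.Pos → Prop
  | CEl.base a, p =>
      ∃ τ ∈ Su, τ.dst = p ∧ occursAt I₀ τ.src a ∧ ¬ occursAt I₀ p a ∧ τ.rev ∈ Su
  | CEl.null _ _ r, p => ∃ τ ∈ Su, τ.src = r ∧ τ.dst = p ∧ τ.rev ∈ Su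

/-- A chase element is `n`-essential: the last `n` UIDs used to create it (the UID
applied to create the fact where it was introduced, then the UID applied to create
the fact where the exported element of that fact was introduced, and so on) are
reversible in `Su`. -/
def essential (I₀ : Inst σ ℕ) (Su : Set (UID σ)) : ℕ → CEl σ → Prop
  | 0, _ => True
  | _ + 1, CEl.base _ => False
  | n + 1, CEl.null x p _ => usedUIDRev I₀ Su x p ∧ essential I₀ Su n x

/-- The bounded simulation relation `(I, a) ≤_n (J, b)`: it always holds for `n = 0`,
and for `n + 1` it holds iff every fact of `I` containing `a` at some position has a
witnessing fact of `J` containing `b` at that position whose elements are pairwise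
`≤_n`-related to those of the original fact. -/
def bsim (I : Inst σ α) (J : Inst σ β) : ℕ → α → β → Prop
  | 0, _, _ => True
  | n + 1, a, b =>
      ∀ (R : σ.Rel) (t : Fin (σ.ar R) → α) (p : Fin (σ.ar R)),
        (⟨R, t⟩ : Fact σ α) ∈ I → t p = a →
        ∃ u : Fin (σ.ar R) → β, (⟨R, u⟩ : Fact σ β) ∈ J ∧ u p = b ∧
          ∀ q : Fin (σ.ar R), bsim I J n (t q) (u q)

/-- Reflexive closure of the UIDs. -/
def ple (Su : Set (UID σ)) (p q : σ.Pos) : Prop :=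
  p = q ∨ ∃ h : p ≠ q, (⟨p, q, h⟩ : UID σ) ∈ Su

theorem ple_trans {Su : Set (UID σ)} (htc : TransClosedUID Su) {p q r : σ.Pos}
    (h1 : ple Su p q) (h2 : ple Su q r) : ple Su p r := by
  rcases h1 with rfl | ⟨h1, h1'⟩
  · exact h2
  rcases h2 with rfl | ⟨h2, h2'⟩
  · exact Or.inr ⟨h1, h1'⟩
  by_cases h : p = r
  · exact Or.inl h
  · exact Or.inr ⟨h, htc _ h1' _ h2' rfl h⟩

/-- The tuple of the fact created for `(x, p)`. -/
def mkT (x : CEl σ) (p : σ.Pos) : Fin (σ.ar p.1) → CEl σ :=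
  fun i => if i = p.2 then x else CEl.null x p ⟨p.1, i⟩

theorem mkT_mem {I₀ : Inst σ ℕ} {Su : Set (UID σ)} {x : CEl σ} {p : σ.Pos}
    (h : Created I₀ Su x p) : (⟨p.1, mkT x p⟩ : Fact σ (CEl σ)) ∈ chaseInst I₀ Su :=
  Or.inr ⟨x, p, h, rfl⟩

theorem fact_cases {I₀ : Inst σ ℕ} {Su : Set (UID σ)} {x : CEl σ} {p r : σ.Pos}
    {R : σ.Rel} {t : Fin (σ.ar R) → CEl σ} {i : Fin (σ.ar R)}
    (hm : (⟨R, t⟩ : Fact σ (CEl σ)) ∈ chaseInst I₀ Su) (hi : t i = CEl.null x p r) :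
    (r = ⟨R, i⟩ ∧ (⟨R, t⟩ : Fact σ (CEl σ)) = ⟨p.1, mkT x p⟩ ∧ Created I₀ Su x p) ∨
    (Created I₀ Su (CEl.null x p r) ⟨R, i⟩ ∧ t = mkT (CEl.null x p r) ⟨R, i⟩) := by
  rcases hm with ⟨F₀, _, hF⟩ | ⟨y, p', hc, hF⟩
  · obtain ⟨R₀, t₀⟩ := F₀
    cases hF
    cases hi
  · obtain ⟨R', j⟩ := p'
    cases hF
    change Fin (σ.ar R') at i
    by_cases hij : i = j
    · subst hij
      simp only [if_true] at hi
      subst hi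
      right
      exact ⟨hc, rfl⟩
    · simp only [if_neg hij] at hi
      cases hi
      left
      exact ⟨rfl, rfl, hc⟩

theorem created_null {I₀ : Inst σ ℕ} {Su : Set (UID σ)} {x : CEl σ} {p r q : σ.Pos}
    (h : Created I₀ Su (CEl.null x p r) q) : ∃ h : r ≠ q, (⟨r, q, h⟩ : UID σ) ∈ Su := by
  cases h with
  | step _ _ _ _ _ _ _ h =>
    obtain ⟨τ, hτ, rfl, rfl⟩ := h
    exact ⟨τ.ne, hτ⟩

theorem bsim_mono {I : Inst σ α} {J : Inst σ β} : ∀ (n : ℕ) (a : α) (b : β),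
    bsim I J (n + 1) a b → bsim I J n a b
  | 0, _, _, _ => trivial
  | n + 1, a, b, h => by
    intro R t p hm hp
    obtain ⟨u, h1, h2, h3⟩ := h R t p hm hp
    exact ⟨u, h1, h2, fun q => bsim_mono n _ _ (h3 q)⟩

theorem essential_mono {I₀ : Inst σ ℕ} {Su : Set (UID σ)} : ∀ (n : ℕ) (a : CEl σ),
    essential I₀ Su (n + 1) a → essential I₀ Su n a
  | 0, _, _ => trivial
  | _ + 1, CEl.base _, h => h.elim
  | n + 1, CEl.null x _ _, h => ⟨h.1, essential_mono n x h.2⟩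

theorem mkT_bsim {I₀ : Inst σ ℕ} {Su : Set (UID σ)} {m : ℕ} {x y : CEl σ} {s : σ.Pos}
    (hb : bsim (chaseInst I₀ Su) (chaseInst I₀ Su) m x y)
    (hn : ∀ i : Fin (σ.ar s.1), i ≠ s.2 → bsim (chaseInst I₀ Su) (chaseInst I₀ Su) m
      (CEl.null x s ⟨s.1, i⟩) (CEl.null y s ⟨s.1, i⟩)) (i : Fin (σ.ar s.1)) :
    bsim (chaseInst I₀ Su) (chaseInst I₀ Su) m (mkT x s i) (mkT y s i) := by
  unfold mkT
  split_ifs with h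
  · exact hb
  · exact hn i h

theorem null_bsim {I₀ : Inst σ ℕ} {Su : Set (UID σ)} : ∀ (m : ℕ) (x y : CEl σ) (s : σ.Pos),
    Created I₀ Su x s → Created I₀ Su y s →
    bsim (chaseInst I₀ Su) (chaseInst I₀ Su) m x y → ∀ i : Fin (σ.ar s.1), i ≠ s.2 →
    bsim (chaseInst I₀ Su) (chaseInst I₀ Su) m
      (CEl.null x s ⟨s.1, i⟩) (CEl.null y s ⟨s.1, i⟩)
  | 0, _, _, _, _, _, _, _, _ => trivial
  | m + 1, x, y, s, hx, hy, hb, i, hi => by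
    have hb' := bsim_mono _ _ _ hb
    intro R t j hm hj
    rcases fact_cases hm hj with ⟨h1, h2, _⟩ | ⟨h1, h2⟩
    · cases h1
      cases h2
      refine ⟨mkT y s, mkT_mem hy, by simp [mkT, hi], ?_⟩
      exact mkT_bsim hb' (fun k hk => null_bsim m x y s hx hy hb' k hk)
    · subst h2
      obtain ⟨hne, hS⟩ := created_null h1
      have hc : Created I₀ Su (CEl.null y s ⟨s.1, i⟩) ⟨R, j⟩ :=
        Created.step _ _ _ _ hy rfl (fun h => hi (by cases s; cases h; rfl)) ⟨_, hS, rfl, rfl⟩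
      have hb2 := null_bsim m x y s hx hy hb' i hi
      refine ⟨mkT (CEl.null y s ⟨s.1, i⟩) ⟨R, j⟩, mkT_mem hc, by simp [mkT], ?_⟩
      exact mkT_bsim (s := ⟨R, j⟩) hb2 (fun k hk => null_bsim m _ _ ⟨R, j⟩ h1 hc hb2 k hk)

/-- `c` is an `n`-essential null introduced at a position equivalent to `s`. -/
def EE (I₀ : Inst σ ℕ) (Su : Set (UID σ)) (n : ℕ) (c : CEl σ) (s : σ.Pos) : Prop :=
  n = 0 ∨ ∃ x p r, c = CEl.null x p r ∧ Created I₀ Su x p ∧ r.1 = p.1 ∧ r ≠ p ∧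
    essential I₀ Su n c ∧ ple Su r s ∧ ple Su s r

theorem pos_ne {s : σ.Pos} {i : Fin (σ.ar s.1)} (hi : i ≠ s.2) :
    (⟨s.1, i⟩ : σ.Pos) ≠ s := fun h => hi (by cases s; cases h; rfl)

/-- The fact introducing an `(n+1)`-essential element is good. -/
theorem good_parent {I₀ : Inst σ ℕ} {Su : Set (UID σ)} {n : ℕ} {x : CEl σ} {p : σ.Pos}
    (hc : Created I₀ Su x p) (hu : usedUIDRev I₀ Su x p) (he : essential I₀ Su n x)
    (i : Fin (σ.ar p.1)) : EE I₀ Su n (mkT x p i) ⟨p.1, i⟩ := by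
  by_cases hi : i = p.2
  · subst hi
    rcases n with _ | n
    · exact Or.inl rfl
    right
    cases x with
    | base a => exact he.elim
    | null y p' r =>
      obtain ⟨τ, hτ, rfl, rfl, hr⟩ := hu
      cases hc with
      | step _ _ _ _ hy h1 h2 h3 =>
        exact ⟨y, p', τ.src, by simp [mkT], hy, h1, h2, by simpa [mkT] using he,
          Or.inr ⟨τ.ne, hτ⟩, Or.inr ⟨τ.ne.symm, hr⟩⟩
  · right
    refine ⟨x, p, ⟨p.1, i⟩, by simp [mkT, hi], hc, rfl, pos_ne hi, ?_, Or.inl rfl, Or.inl rfl⟩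
    apply essential_mono
    simp only [mkT, if_neg hi]
    exact ⟨hu, he⟩

theorem good_child {I₀ : Inst σ ℕ} {Su : Set (UID σ)} {n : ℕ} {x : CEl σ} {p r s : σ.Pos}
    (he : essential I₀ Su (n + 1) (CEl.null x p r))
    (hc : Created I₀ Su (CEl.null x p r) s) (hsr : ple Su s r) (i : Fin (σ.ar s.1)) :
    EE I₀ Su n (mkT (CEl.null x p r) s i) ⟨s.1, i⟩ := by
  obtain ⟨hne, hS⟩ := created_null hc
  rcases hsr with h | ⟨h, hS'⟩
  · exact absurd h.symm hne
  exact good_parent hc ⟨_, hS, rfl, rfl, hS'⟩ (essential_mono _ _ he) i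

theorem main_bsim {I₀ : Inst σ ℕ} {Su : Set (UID σ)} (htc : TransClosedUID Su) :
    ∀ (n : ℕ) (a b : CEl σ) (s : σ.Pos), EE I₀ Su n a s → EE I₀ Su n b s →
    bsim (chaseInst I₀ Su) (chaseInst I₀ Su) n a b
  | 0, _, _, _, _, _ => trivial
  | n + 1, a, b, s, ha, hb => by
    have EEm : ∀ c, EE I₀ Su (n + 1) c s → EE I₀ Su n c s := by
      rintro c (h | ⟨x, p, r, h1, h2, h3, h4, h5, h6⟩)
      · cases h
      · exact Or.inr ⟨x, p, r, h1, h2, h3, h4, essential_mono _ _ h5, h6⟩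
    have hab := main_bsim htc n a b s (EEm a ha) (EEm b hb)
    rcases ha with h | ⟨x, p, r, rfl, hcx, hrp, hrp', hea, hrs, hsr⟩
    · cases h
    rcases hb with h | ⟨y, p', r', rfl, hcy, hrp2, hrp2', heb, hrs', hsr'⟩
    · cases h
    have hr'r : ple Su r' r := ple_trans htc hrs' hsr
    have hrr' : ple Su r r' := ple_trans htc hrs hsr'
    intro R t j hm hj
    rcases fact_cases hm hj with ⟨h1, h2, _⟩ | ⟨h1, h2⟩
    · subst h1
      cases hrp
      cases h2
      have hg := good_parent hcx hea.1 hea.2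
      rcases hr'r with h | ⟨h, hS⟩
      · subst h
        obtain ⟨R', k⟩ := p'
        cases hrp2
        refine ⟨mkT y ⟨_, k⟩, mkT_mem hcy, ?_, fun i => main_bsim htc n _ _ _ (hg i)
          (good_parent hcy heb.1 heb.2 i)⟩
        have : j ≠ k := fun h => hrp2' (by rw [h])
        simp [mkT, this]
      · have hc := Created.step _ _ _ _ hcy hrp2 hrp2' ⟨_, hS, rfl, rfl⟩
        exact ⟨mkT (CEl.null y p' r') ⟨p.1, j⟩, mkT_mem hc, by simp [mkT], fun i => main_bsim htc n _ _ _ (hg i)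
          (good_child heb hc hrr' i)⟩
    · subst h2
      obtain ⟨hne, hS⟩ := created_null h1
      rcases ple_trans htc hr'r (Or.inr ⟨hne, hS⟩) with h | ⟨h, hS'⟩
      · subst h
        have hg := good_child hea h1 hr'r
        obtain ⟨R', k⟩ := p'
        cases hrp2
        refine ⟨mkT y ⟨_, k⟩, mkT_mem hcy, ?_, fun i => main_bsim htc n _ _ _ (hg i)
          (good_parent hcy heb.1 heb.2 i)⟩
        have : j ≠ k := fun h => hrp2' (by rw [h])
        simp [mkT, this]
      · have hc := Created.step _ _ _ _ hcy hrp2 hrp2' ⟨_, hS', rfl, rfl⟩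
        exact ⟨_, mkT_mem hc, by simp [mkT], mkT_bsim (s := ⟨R, j⟩) hab
          (fun k hk => null_bsim n _ _ ⟨R, j⟩ h1 hc hab k hk)⟩

/-- **UID Chase Similarity Theorem.** Let `Su` be a transitively closed set of UIDs
and let `a`, `b` be elements introduced in the chase of `I₀` by `Su` at positions `p`
and `q` respectively. If `a` and `b` are both `n`-essential and both UIDs `p ⊆ q`
and `q ⊆ p` are in `Su`, then `a ≃_n b` in the chase. -/
theorem uid_chase_similarity
    {σ : Sig} (I₀ : Inst σ ℕ) (Su : Set (UID σ))
    (htc : TransClosedUID Su) (n : ℕ)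
    (a b : CEl σ) (p q : σ.Pos)
    (ha : IntroducedAt I₀ Su a p) (hb : IntroducedAt I₀ Su b q)
    (hea : essential I₀ Su n a) (heb : essential I₀ Su n b)
    (hpq : p ≠ q)
    (h1 : (⟨p, q, hpq⟩ : UID σ) ∈ Su)
    (h2 : (⟨q, p, hpq.symm⟩ : UID σ) ∈ Su) :
    bsim (chaseInst I₀ Su) (chaseInst I₀ Su) n a b ∧
    bsim (chaseInst I₀ Su) (chaseInst I₀ Su) n b a := by
  have hA : EE I₀ Su n a p := by
    obtain ⟨x, p', h3, h4, h5, h6⟩ := ha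
    exact Or.inr ⟨x, p', p, h6, h3, h4, h5, hea, Or.inl rfl, Or.inl rfl⟩
  have hB : EE I₀ Su n b p := by
    obtain ⟨x, p', h3, h4, h5, h6⟩ := hb
    exact Or.inr ⟨x, p', q, h6, h3, h4, h5, heb, Or.inr ⟨_, h2⟩, Or.inr ⟨_, h1⟩⟩
  exact ⟨main_bsim htc n a b p hA hB, main_bsim htc n b a p hB hA⟩

end FQA
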